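/- arXiv:2001.04578 — 2 statements merged into one kernel-verified Lean document; each statement's English description precedes it below -/
import Mathlib

section
/- For every C¹ parametrized surface 𝕏 = (X,Y,Z): D → ℝ³ one has the pointwise bound −XB + YA ≤ √(X²+Y²)·√(A²+B²), hence ∬_D (−XB + YA) ds dt ≤ (sup_D √(X²+Y²)) · ∬_D √(A²+B²) ds dt. Consequently, for any bounded domain M in ℍ₁ whose boundary ∂M is such a closed parametrized surface, the isoperimetric-type inequality V(M) ≤ ½ (sup_{(x,y,z) ∈ ∂M} √(x²+y²)) · 𝒜(∂M) holds, where V(M) is the Lebesgue volume of M and 𝒜(∂M) is the p-area of ∂M. -/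
/-!
The pointwise bound is the Cauchy–Schwarz inequality in the plane for `(-X, Y)` and `(B, A)`.
Bounding `√(X² + Y²)` by its supremum over `D` and integrating gives the integral bound; as `D` need
not be measurable, the supremum bound is passed to almost every point of `volume.restrict D` through
the closed set `{√(X² + Y²) ≤ sup}`. The volume inequality follows by inserting the integral
formula for the volume, the supremum over `∂M = 𝕏(D)` being the supremum over `D`.
-/

open MeasureTheory

/-- Partial derivative with respect to the first variable. -/
noncomputable def pds (F : ℝ → ℝ → ℝ) (s t : ℝ) : ℝ := deriv (fun u => F u t) s

/-- Partial derivative with respect to the second variable. -/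
noncomputable def pdt (F : ℝ → ℝ → ℝ) (s t : ℝ) : ℝ := deriv (fun u => F s u) t

/-- `A = Z_s X_t − X_s Z_t + X(X_t Y_s − X_s Y_t)`. -/
noncomputable def cA (X Y Z : ℝ → ℝ → ℝ) (s t : ℝ) : ℝ :=
  pds Z s t * pdt X s t - pds X s t * pdt Z s t
    + X s t * (pdt X s t * pds Y s t - pds X s t * pdt Y s t)

/-- `B = Z_s Y_t − Y_s Z_t + Y(X_t Y_s − X_s Y_t)`. -/
noncomputable def cB (X Y Z : ℝ → ℝ → ℝ) (s t : ℝ) : ℝ :=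
  pds Z s t * pdt Y s t - pds Y s t * pdt Z s t
    + Y s t * (pdt X s t * pds Y s t - pds X s t * pdt Y s t)

theorem neg_mul_add_mul_le_sqrt_mul_sqrt (x y a b : ℝ) :
    -x * b + y * a ≤ Real.sqrt (x ^ 2 + y ^ 2) * Real.sqrt (a ^ 2 + b ^ 2) := by
  rw [← Real.sqrt_mul (by positivity)]
  apply Real.le_sqrt_of_sq_le
  nlinarith [sq_nonneg (x * a + y * b)]

/-- the pointwise bound `−XB + YA ≤ √(X²+Y²)·√(A²+B²)`, the resulting
integral bound over the parameter domain `D`, and the isoperimetric-type inequality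
`V(M) ≤ ½ (sup_{(x,y,z)∈∂M} √(x²+y²)) · 𝒜(∂M)` for a bounded domain `M` whose
boundary is the closed parametrized surface `𝕏(D)` (outward oriented, so that
`V(M) = ½∬_D(−XB + YA) ds dt`). -/
theorem stmt13 (X Y Z : ℝ → ℝ → ℝ) (D : Set (ℝ × ℝ))
    (hC : ContDiff ℝ 1 fun q : ℝ × ℝ => (X q.1 q.2, Y q.1 q.2, Z q.1 q.2))
    (hne : D.Nonempty)
    (hInt1 : IntegrableOn
      (fun q : ℝ × ℝ => -(X q.1 q.2) * cB X Y Z q.1 q.2 + Y q.1 q.2 * cA X Y Z q.1 q.2) D)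
    (hInt2 : IntegrableOn
      (fun q : ℝ × ℝ => Real.sqrt ((cA X Y Z q.1 q.2) ^ 2 + (cB X Y Z q.1 q.2) ^ 2)) D)
    (hBdd : BddAbove
      ((fun q : ℝ × ℝ => Real.sqrt ((X q.1 q.2) ^ 2 + (Y q.1 q.2) ^ 2)) '' D))
    (M : Set (ℝ × ℝ × ℝ)) (hMbdd : Bornology.IsBounded M)
    (hbdry : frontier M = (fun q : ℝ × ℝ => (X q.1 q.2, Y q.1 q.2, Z q.1 q.2)) '' D)
    (hvol : (volume M).toReal
      = (1 / 2) * ∫ q in D,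
          (-(X q.1 q.2) * cB X Y Z q.1 q.2 + Y q.1 q.2 * cA X Y Z q.1 q.2)) :
    (∀ s t, -(X s t) * cB X Y Z s t + Y s t * cA X Y Z s t
      ≤ Real.sqrt ((X s t) ^ 2 + (Y s t) ^ 2)
        * Real.sqrt ((cA X Y Z s t) ^ 2 + (cB X Y Z s t) ^ 2))
    ∧ (∫ q in D, (-(X q.1 q.2) * cB X Y Z q.1 q.2 + Y q.1 q.2 * cA X Y Z q.1 q.2))
      ≤ sSup ((fun q : ℝ × ℝ => Real.sqrt ((X q.1 q.2) ^ 2 + (Y q.1 q.2) ^ 2)) '' D)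
        * ∫ q in D, Real.sqrt ((cA X Y Z q.1 q.2) ^ 2 + (cB X Y Z q.1 q.2) ^ 2)
    ∧ (volume M).toReal
      ≤ (1 / 2) * sSup ((fun p : ℝ × ℝ × ℝ => Real.sqrt (p.1 ^ 2 + p.2.1 ^ 2)) '' frontier M)
        * ∫ q in D, Real.sqrt ((cA X Y Z q.1 q.2) ^ 2 + (cB X Y Z q.1 q.2) ^ 2) := by
  have hpt : ∀ s t, -(X s t) * cB X Y Z s t + Y s t * cA X Y Z s t
      ≤ Real.sqrt ((X s t) ^ 2 + (Y s t) ^ 2)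
        * Real.sqrt ((cA X Y Z s t) ^ 2 + (cB X Y Z s t) ^ 2) :=
    fun s t => neg_mul_add_mul_le_sqrt_mul_sqrt _ _ _ _
  have hX : Continuous fun q : ℝ × ℝ => X q.1 q.2 := hC.continuous.fst
  have hY : Continuous fun q : ℝ × ℝ => Y q.1 q.2 := hC.continuous.snd.fst
  have hR : Continuous fun q : ℝ × ℝ => Real.sqrt ((X q.1 q.2) ^ 2 + (Y q.1 q.2) ^ 2) :=
    ((hX.pow 2).add (hY.pow 2)).sqrt
  have hle : (∫ q in D, (-(X q.1 q.2) * cB X Y Z q.1 q.2 + Y q.1 q.2 * cA X Y Z q.1 q.2))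
      ≤ sSup ((fun q : ℝ × ℝ => Real.sqrt ((X q.1 q.2) ^ 2 + (Y q.1 q.2) ^ 2)) '' D)
        * ∫ q in D, Real.sqrt ((cA X Y Z q.1 q.2) ^ 2 + (cB X Y Z q.1 q.2) ^ 2) := by
    rw [← integral_const_mul]
    refine integral_mono_ae hInt1 (hInt2.const_mul _) ?_
    -- Measurability of the sublevel set stands in for measurability of `D`.
    have hae : ∀ᵐ q ∂(volume.restrict D), Real.sqrt ((X q.1 q.2) ^ 2 + (Y q.1 q.2) ^ 2)
        ≤ sSup ((fun q : ℝ × ℝ => Real.sqrt ((X q.1 q.2) ^ 2 + (Y q.1 q.2) ^ 2)) '' D) :=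
      (ae_restrict_iff (isClosed_le hR continuous_const).measurableSet).2
        (Filter.Eventually.of_forall fun q hq => le_csSup hBdd (Set.mem_image_of_mem _ hq))
    filter_upwards [hae] with q hq
    exact (hpt q.1 q.2).trans (mul_le_mul_of_nonneg_right hq (Real.sqrt_nonneg _))
  refine ⟨hpt, hle, ?_⟩
  rw [hvol, hbdry, Set.image_image, mul_assoc]
  exact mul_le_mul_of_nonneg_left hle (by norm_num)
end

section
/- Let ℓ be a line segment of horizontal length s₀ lying in the xy-plane in ℍ₁, let P be a plane perpendicular to ℓ (hence a vertical plane), and let ℛ ⊂ P be a compact plane region. Let M = ℛ × ℓ be the solid cylindrical domain obtained by parallel translating ℛ along ℓ (so that ℛ stays Euclidean-perpendicular to ℓ). Then the Lebesgue volume of M satisfies Pappus–Guldin's theorem with the p-area: Volume(M) = 𝒜(ℛ) · s₀, where 𝒜(ℛ) is the p-area of ℛ, which for a region in a vertical plane equals its Euclidean area; moreover the horizontal length s₀ of ℓ equals its Euclidean length. -/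
/-! The solid `M` is the image of `[0, s₀] × ℛ` under a rigid motion of `ℝ³`, which preserves
Lebesgue measure (`measurePreserving_motion`), so its volume is `s₀ · |ℛ|` by the product formula.
The p-area integrand of a vertical plane is `√(c₁² + c₂²) = 1` (`pArea_integrand_eq_one`), so the
p-area of `ℛ` is `|ℛ|`. -/

open MeasureTheory

/-- The rigid motion `(s, u, v) ↦ (x₀ + s c₁ - u c₂, y₀ + s c₂ + u c₁, v)` preserves Lebesgue
measure: it is a planar rotation followed by a translation in the first two coordinates, and the
identity in the third. -/
theorem measurePreserving_motion (x₀ y₀ c₁ c₂ : ℝ) (hc : c₁ ^ 2 + c₂ ^ 2 = 1) :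
    MeasurePreserving (fun p : ℝ × ℝ × ℝ =>
      (x₀ + p.1 * c₁ - p.2.1 * c₂, y₀ + p.1 * c₂ + p.2.1 * c₁, p.2.2)) := by
  let L : ℝ × ℝ →ₗ[ℝ] ℝ × ℝ :=
    Matrix.toLin (Module.Basis.finTwoProd ℝ) (Module.Basis.finTwoProd ℝ) !![c₁, -c₂; c₂, c₁]
  have hLdet : LinearMap.det L = 1 := by
    simp only [L, LinearMap.det_toLin, Matrix.det_fin_two_of]
    linarith
  have hLapp : ∀ p : ℝ × ℝ, L p = (c₁ * p.1 + -c₂ * p.2, c₂ * p.1 + c₁ * p.2) := fun p => by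
    simp only [L, Matrix.toLin_finTwoProd_apply]
  have hL : MeasurePreserving L := by
    refine ⟨(LinearMap.continuous_of_finiteDimensional L).measurable, ?_⟩
    rw [Measure.map_linearMap_addHaar_eq_smul_addHaar volume (by rw [hLdet]; exact one_ne_zero),
      hLdet]
    simp
  have hT : MeasurePreserving (fun p : ℝ × ℝ => (x₀, y₀) + L p) :=
    (measurePreserving_add_left volume ((x₀, y₀) : ℝ × ℝ)).comp hL
  have h := (volume_preserving_prodAssoc (α₁ := ℝ) (β₁ := ℝ) (γ₁ := ℝ)).comp
    ((hT.prod (MeasurePreserving.id (volume : Measure ℝ))).comp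
      (volume_preserving_prodAssoc (α₁ := ℝ) (β₁ := ℝ) (γ₁ := ℝ)).symm)
  convert h using 1
  funext p
  obtain ⟨a, b, c⟩ := p
  simp only [Function.comp_apply, MeasurableEquiv.prodAssoc, MeasurableEquiv.symm_mk,
    MeasurableEquiv.coe_mk, Equiv.prodAssoc_symm_apply, Equiv.prodAssoc_apply, Prod.map, id, hLapp,
    Prod.mk_add_mk, Prod.mk.injEq, and_true]
  constructor <;> ring

/-- In the vertical plane the p-area integrand is identically `1`, since `X_t = Y_t = Z_s = 0`
leaves `A = c₂` and `B = -c₁`. -/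
theorem pArea_integrand_eq_one (x₀ y₀ c₁ c₂ : ℝ) (hc : c₁ ^ 2 + c₂ ^ 2 = 1) (X Y Z : ℝ → ℝ → ℝ)
    (hX : ∀ u v, X u v = x₀ - u * c₂) (hY : ∀ u v, Y u v = y₀ + u * c₁)
    (hZ : ∀ u v, Z u v = v) (s t : ℝ) :
    Real.sqrt ((cA X Y Z s t) ^ 2 + (cB X Y Z s t) ^ 2) = 1 := by
  have hA : cA X Y Z s t = c₂ := by simp [cA, pds, pdt, hX, hY, hZ]
  have hB : cB X Y Z s t = -c₁ := by simp [cB, pds, pdt, hX, hY, hZ]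
  rw [hA, hB, Real.sqrt_eq_one]
  linarith

/-- Pappus–Guldin for a solid cylinder over a vertical plane region:
let `ℓ` be the segment `s ↦ (x₀ + s c₁, y₀ + s c₂, 0)`, `s ∈ [0,s₀]`, in the
`xy`-plane with unit direction `(c₁,c₂)`, let `P` be the vertical plane through
`(x₀,y₀,0)` perpendicular to `ℓ`, spanned by `(−c₂,c₁,0)` and `(0,0,1)`, carrying a
compact plane region `ℛ`, and let `M = ℛ × ℓ` be the solid obtained by parallel
translating `ℛ` along `ℓ`.  Then the p-area of `ℛ` equals its Euclidean area,
`Volume(M) = 𝒜(ℛ) · s₀`, and the horizontal length `s₀` of `ℓ` equals its Euclidean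
length. -/
theorem stmt17 (x₀ y₀ c₁ c₂ s₀ : ℝ) (hs₀ : 0 ≤ s₀) (hc : c₁ ^ 2 + c₂ ^ 2 = 1)
    (R : Set (ℝ × ℝ)) (hR : IsCompact R)
    (M : Set (ℝ × ℝ × ℝ))
    (hM : M = (fun p : ℝ × ℝ × ℝ =>
        (x₀ + p.1 * c₁ - p.2.1 * c₂, y₀ + p.1 * c₂ + p.2.1 * c₁, p.2.2))
      '' (Set.Icc 0 s₀ ×ˢ R))
    -- the embedding of the vertical plane `P` carrying `ℛ`
    (X Y Z : ℝ → ℝ → ℝ)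
    (hX : ∀ u v, X u v = x₀ - u * c₂)
    (hY : ∀ u v, Y u v = y₀ + u * c₁)
    (hZ : ∀ u v, Z u v = v) :
    -- the p-area of `ℛ` equals its Euclidean area
    (∫ q in R, Real.sqrt ((cA X Y Z q.1 q.2) ^ 2 + (cB X Y Z q.1 q.2) ^ 2))
      = (volume R).toReal
    -- Pappus–Guldin: volume = p-area of the region times the length of the segment
    ∧ (volume M).toReal
      = (∫ q in R, Real.sqrt ((cA X Y Z q.1 q.2) ^ 2 + (cB X Y Z q.1 q.2) ^ 2)) * s₀
    -- the horizontal length of `ℓ` equals its Euclidean length `s₀`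
    ∧ (∫ s in (0:ℝ)..s₀, Real.sqrt (c₁ ^ 2 + c₂ ^ 2)) = s₀ := by
  have hArea : (∫ q in R, Real.sqrt ((cA X Y Z q.1 q.2) ^ 2 + (cB X Y Z q.1 q.2) ^ 2))
      = (volume R).toReal := by
    simp only [pArea_integrand_eq_one x₀ y₀ c₁ c₂ hc X Y Z hX hY hZ]
    simp [Measure.real]
  refine ⟨hArea, ?_, by simp [hc]⟩
  rw [hArea, hM]
  have hf := measurePreserving_motion x₀ y₀ c₁ c₂ hc
  have hinj : Function.Injective (fun p : ℝ × ℝ × ℝ =>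
      (x₀ + p.1 * c₁ - p.2.1 * c₂, y₀ + p.1 * c₂ + p.2.1 * c₁, p.2.2)) := by
    rintro ⟨a, b, c⟩ ⟨a', b', c'⟩ h
    simp only [Prod.mk.injEq] at h
    obtain ⟨h1, h2, h3⟩ := h
    -- the coefficients are those of the inverse rotation
    have ha : a = a' := by linear_combination c₁ * h1 + c₂ * h2 - (a - a') * hc
    have hb : b = b' := by linear_combination -c₂ * h1 + c₁ * h2 - (b - b') * hc
    rw [ha, hb, h3]
  have hcomp := (isCompact_Icc (a := (0 : ℝ)) (b := s₀)).prod hR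
  have hmeas := (hcomp.image (f := fun p : ℝ × ℝ × ℝ =>
      (x₀ + p.1 * c₁ - p.2.1 * c₂, y₀ + p.1 * c₂ + p.2.1 * c₁, p.2.2))
      (by fun_prop)).measurableSet
  rw [← hf.measure_preimage hmeas.nullMeasurableSet, Set.preimage_image_eq _ hinj,
    Measure.volume_eq_prod, Measure.prod_prod, Real.volume_Icc, ENNReal.toReal_mul, sub_zero,
    ENNReal.toReal_ofReal hs₀, mul_comm]
end
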